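/- arXiv:2003.04990 — 3 statements merged into one kernel-verified Lean document; each statement's English description precedes it below -/
import Mathlib

section
/- Let d ≥ 1 be an integer, let q = s_d − 1 where s_d is the d-th term of Sylvester's sequence, and let N ≥ q^{dq}. Then in the hat guessing game on G_d(N) with q colors, the players have a winning strategy; that is, there exists an assignment to each vertex v of a function g_v from q-colorings of its neighborhood to {1,…,q} such that for every q-coloring χ of the vertices, some vertex v satisfies g_v(χ restricted to N(v)) = χ(v). -/
/-!
Call a family of strategies winning if on every coloring at least one member of it guesses some
color correctly. A single vertex has a winning family of `q` constant strategies, and a winning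
family with one member is a winning strategy. One level of the tree trades a winning family of
`t * (t + 1)` strategies for one of `t` strategies, so that `t = 1` is reached after `d` levels,
because `s_{n+1} - 1 = (s_n - 1) * s_n`.

For the trade, let `g` be a winning family of `t * (t + 1)` strategies on `G`, and put a root above
many copies of `G`. In the `i`-th of the new strategies, the players below the root look up the
pair `(i, c)`, where `c` is the color of the root, and every copy has its own plan that says which
pairs stand for which members of `g`. The bound on `N` leaves room for all `(t * q) ^ (t * (t + 1))`
plans, and the presence of every injective one implies that fewer than `t * (t + 1)` pairs make
everybody below the root guess wrong. Hence for at most `t` colors `c` do all of `(1, c), …, (t, c)`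
fail. The root sees everything below it and so knows these colors, and across its `t` strategies it
can guess each of them once.
-/

/-- A winning guessing strategy in the hat guessing game on `G` with `q` colors:
each vertex `v` gets a guessing function from colorings of its open neighborhood
to colors, such that for every coloring some vertex guesses its own color. -/
def HatWinning {V : Type*} (G : SimpleGraph V) (q : ℕ) : Prop :=
  ∃ g : (v : V) → ({w : V // G.Adj v w} → Fin q) → Fin q,
    ∀ χ : V → Fin q, ∃ v : V, g v (fun w => χ w.1) = χ v

/-- The hat guessing number of `G`: the largest number of colors for which the
players have a winning strategy. -/
noncomputable def hatGuessingNumber {V : Type*} (G : SimpleGraph V) : ℕ :=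
  sSup {q : ℕ | HatWinning G q}

/-- Sylvester's sequence: `s 0 = 2`, `s (n+1) = s n ^ 2 - s n + 1`. -/
def sylvester : ℕ → ℕ
  | 0 => 2
  | n + 1 => sylvester n ^ 2 - sylvester n + 1

/-- The graph `G_d(N)`: vertices are the vertices of the complete rooted `N`-ary
tree of depth `d` (encoded as lists of child-indices of length at most `d`), and
each vertex is adjacent to all of its ancestors (its proper prefixes). -/
def ancTree (d N : ℕ) : SimpleGraph {l : List (Fin N) // l.length ≤ d} where
  Adj v w := v ≠ w ∧ (v.1 <+: w.1 ∨ w.1 <+: v.1)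
  symm := by
    constructor
    intro v w h
    exact ⟨h.1.symm, h.2.symm⟩
  loopless := by
    constructor
    intro v h
    exact h.1 rfl

/-- The book graph `B_{d,n}`: a spine of `d` vertices forming a clique, completely
joined to `n` pages forming an independent set. -/
def bookGraph (d n : ℕ) : SimpleGraph (Fin d ⊕ Fin n) where
  Adj x y := x ≠ y ∧ (x.isLeft ∨ y.isLeft)
  symm := by
    constructor
    intro x y h
    exact ⟨h.1.symm, h.2.symm⟩
  loopless := by
    constructor
    intro x h
    exact h.1 rfl

/-- A set `S ⊆ ℕ^d` is coverable if it can be partitioned into parts `S_1, …, S_d`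
such that `S_i` contains at most one point on every line parallel to the `i`-th
coordinate axis, i.e. two distinct points in part `i` differ in some coordinate
other than the `i`-th. -/
def Coverable {d : ℕ} (S : Set (Fin d → ℕ)) : Prop :=
  ∃ f : (Fin d → ℕ) → Fin d, ∀ x ∈ S, ∀ y ∈ S,
    x ≠ y → f x = f y → ∃ j : Fin d, j ≠ f x ∧ x j ≠ y j

/-- `hcov d` is `h(ℕ^d)`: the largest `t` such that every `t`-element subset of
`ℕ^d` is coverable. -/
noncomputable def hcov (d : ℕ) : ℕ :=
  sSup {t : ℕ | ∀ S : Set (Fin d → ℕ), S.Finite → S.ncard = t → Coverable S}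

/-- `p` is a left-to-right path with `k` edges in a graph on `Fin n` with the
natural vertex ordering: a strictly increasing sequence of `k+1` vertices in which
consecutive vertices are adjacent. -/
def IsLTRPath {n : ℕ} (G : SimpleGraph (Fin n)) (k : ℕ) (p : Fin (k + 1) → Fin n) : Prop :=
  StrictMono p ∧ ∀ i : Fin k, G.Adj (p i.castSucc) (p i.succ)

/-- The depth of a vertex `v`: the largest number of edges in a left-to-right path
ending at `v`. -/
noncomputable def ltrDepth {n : ℕ} (G : SimpleGraph (Fin n)) (v : Fin n) : ℕ :=
  sSup {k : ℕ | ∃ p : Fin (k + 1) → Fin n, IsLTRPath G k p ∧ p (Fin.last k) = v}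

open Finset

/-- The map `t ↦ t * (t + 1)`, which is the recursion of Sylvester's sequence for `s_n - 1`. -/
def pronic (t : ℕ) : ℕ :=
  t * (t + 1)

lemma self_le_pronic (t : ℕ) : t ≤ pronic t :=
  Nat.le_mul_of_pos_right t t.succ_pos

lemma self_le_iterate_pronic (d t : ℕ) : t ≤ pronic^[d] t :=
  Function.id_le_iterate_of_id_le self_le_pronic d t

section Strategies

variable {V W ι β P κ : Type*} {G : SimpleGraph V} {H : SimpleGraph W} {q : ℕ}

/-- A guessing strategy for the hat guessing game on `G` with `q` colors, in the encoding of
`HatWinning`. -/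
abbrev HatStrategy (G : SimpleGraph V) (q : ℕ) : Type _ :=
  (v : V) → ({w : V // G.Adj v w} → Fin q) → Fin q

/-- The strategy `g` wins on the coloring `χ` if some vertex guesses its own color. -/
def HatStrategy.Wins (g : HatStrategy G q) (χ : V → Fin q) : Prop :=
  ∃ v, g v (fun w => χ w) = χ v

/-- A family of strategies is winning if on every coloring at least one of its members wins. This
relaxes `HatWinning`, which is the case of a family with one member. -/
def IsWinningFamily (g : ι → HatStrategy G q) : Prop :=
  ∀ χ, ∃ i, (g i).Wins χ

lemma IsWinningFamily.hatWinning [Unique ι] {g : ι → HatStrategy G q} (hg : IsWinningFamily g) :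
    HatWinning G q :=
  ⟨g default, fun χ => Unique.exists_iff.mp (hg χ)⟩

lemma isWinningFamily_const [Nonempty V] :
    IsWinningFamily (fun c _ _ => c : Fin q → HatStrategy G q) :=
  fun χ => ⟨χ (Classical.arbitrary V), _, rfl⟩

/-- The strategy on `H` that corresponds to a strategy on the isomorphic graph `G`. -/
def HatStrategy.comap (e : H ≃g G) (g : HatStrategy G q) : HatStrategy H q :=
  fun v x => g (e v) fun w => x ⟨e.symm w, e.map_rel_iff.mp (by simpa using w.2)⟩

lemma HatStrategy.Wins.comap {g : HatStrategy G q} (e : H ≃g G) {χ : W → Fin q}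
    (hg : g.Wins (χ ∘ e.symm)) : (g.comap e).Wins χ := by
  obtain ⟨v, hv⟩ := hg
  obtain ⟨w, rfl⟩ := e.surjective v
  exact ⟨w, by simpa [HatStrategy.comap] using hv⟩

lemma IsWinningFamily.comap {g : ι → HatStrategy G q} (hg : IsWinningFamily g) (e : H ≃g G) :
    IsWinningFamily fun i => (g i).comap e :=
  fun χ => (hg (χ ∘ e.symm)).imp fun _ hi => hi.comap e

/-- The `p`-th strategy on the disjoint union `⊥ □ G` of copies of `G` indexed by `κ`: the `k`-th
copy plays the member of the family `g` that `p` stands for under the plan of this copy, where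
`plan k b = p` means that `p` stands for `g b`. -/
noncomputable def copiesStrategy [Nonempty β] (g : β → HatStrategy G q) (plan : κ → β → P)
    (p : P) : HatStrategy ((⊥ : SimpleGraph κ) □ G) q :=
  fun v x => g (Function.invFun (plan v.1) p) v.2
    fun w => x ⟨(v.1, w), SimpleGraph.boxProd_adj_right.mpr w.2⟩

lemma IsWinningFamily.copiesStrategy_comp [Nonempty β] {g : β → HatStrategy G q}
    (hg : IsWinningFamily g) {plan : κ → β → P} {e : β ↪ P} (he : ∃ k, plan k = e) :
    IsWinningFamily (copiesStrategy g plan ∘ e) := by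
  intro χ
  obtain ⟨k, hk⟩ := he
  obtain ⟨b, v, hv⟩ := hg fun v => χ (k, v)
  refine ⟨b, (k, v), ?_⟩
  have hb : Function.invFun (plan k) (e b) = b := hk ▸ Function.leftInverse_invFun e.injective b
  simpa only [Function.comp_apply, copiesStrategy, hb] using hv

/-- The cone over `H`: the graph `H` together with a new vertex `none` adjacent to all of `H`. -/
def coneGraph (H : SimpleGraph W) : SimpleGraph (Option W) where
  Adj
    | none, none => False
    | some v, some w => H.Adj v w
    | _, _ => True
  symm := ⟨by rintro (_ | v) (_ | w) h <;> first | exact h | exact SimpleGraph.Adj.symm h⟩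
  loopless := ⟨by rintro (_ | v) h; exacts [h, H.irrefl h]⟩

/-- The strategy on the cone over `H` in which the apex guesses by `r`, while the other vertices
play the strategy on `H` that `h` assigns to the color of the apex. -/
def coneStrategy (r : (W → Fin q) → Fin q) (h : Fin q → HatStrategy H q) :
    HatStrategy (coneGraph H) q
  | none, x => r fun v => x ⟨some v, trivial⟩
  | some v, x => h (x ⟨none, trivial⟩) v fun w => x ⟨some w, w.2⟩

lemma wins_coneStrategy_iff {r : (W → Fin q) → Fin q} {h : Fin q → HatStrategy H q}
    {χ : Option W → Fin q} :
    (coneStrategy r h).Wins χ ↔ r (χ ∘ some) = χ none ∨ (h (χ none)).Wins (χ ∘ some) :=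
  Option.exists

lemma exists_forall_exists_eq_or_notMem {α : Type*} [Fintype ι] [Nonempty α] (L : Finset (ι × α))
    (hL : #L < pronic (Fintype.card ι)) :
    ∃ r : ι → α, ∀ c, ∃ i, r i = c ∨ (i, c) ∉ L := by
  classical
  let C : Finset α := {c ∈ L.image Prod.snd | ∀ i, (i, c) ∈ L}
  have hCL : univ ×ˢ C ⊆ L := fun p hp => (mem_filter.mp (mem_product.mp hp).2).2 p.1
  have hC : #C ≤ Fintype.card ι := by
    have hle := card_le_card hCL
    rw [card_product, card_univ] at hle
    exact Nat.lt_succ_iff.mp (lt_of_mul_lt_mul_left (hle.trans_lt hL) (Nat.zero_le _))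
  obtain ⟨e⟩ : Nonempty (C ↪ ι) := Function.Embedding.nonempty_of_card_le (by simpa using hC)
  have : Nonempty ι := Fintype.card_pos_iff.mp (Nat.pos_of_mul_pos_right (Nat.zero_lt_of_lt hL))
  refine ⟨Function.extend e Subtype.val fun _ => Classical.arbitrary α, fun c => ?_⟩
  by_contra! hc
  have hcC : c ∈ C :=
    mem_filter.mpr ⟨mem_image_of_mem Prod.snd (hc (Classical.arbitrary ι)).2, fun i => (hc i).2⟩
  exact (hc (e ⟨c, hcC⟩)).1 (e.injective.extend_apply _ _ _)

lemma card_not_wins_lt [Fintype ι] [Fintype β] {g : ι → HatStrategy G q}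
    (hg : ∀ e : β ↪ ι, IsWinningFamily (g ∘ e)) (χ : V → Fin q)
    [DecidablePred fun i => ¬ (g i).Wins χ] :
    #{i | ¬ (g i).Wins χ} < Fintype.card β := by
  by_contra! hle
  obtain ⟨e⟩ : Nonempty (β ↪ ({i | ¬ (g i).Wins χ} : Finset ι)) :=
    Function.Embedding.nonempty_of_card_le (by rwa [Fintype.card_coe])
  obtain ⟨b, hb⟩ := hg (e.trans (.subtype _)) χ
  exact (mem_filter.mp (e b).2).2 hb

lemma exists_isWinningFamily_cone [Fintype ι] [Fintype β] [NeZero q]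
    (hβ : Fintype.card β ≤ pronic (Fintype.card ι))
    {h : ι × Fin q → HatStrategy H q} (hh : ∀ e : β ↪ ι × Fin q, IsWinningFamily (h ∘ e)) :
    ∃ g : ι → HatStrategy (coneGraph H) q, IsWinningFamily g := by
  classical
  have hr (χ : W → Fin q) : ∃ r : ι → Fin q, ∀ c, ∃ i, r i = c ∨ (h (i, c)).Wins χ := by
    simpa using exists_forall_exists_eq_or_notMem {p | ¬ (h p).Wins χ}
      ((card_not_wins_lt hh χ).trans_le hβ)
  choose r hr using hr
  refine ⟨fun i => coneStrategy (r · i) fun c => h (i, c), fun χ => ?_⟩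
  exact (hr (χ ∘ some) (χ none)).imp fun _ => wins_coneStrategy_iff.mpr

lemma IsWinningFamily.exists_cone_copies [Fintype ι] [Fintype β] [Fintype κ] [NeZero q]
    {g : β → HatStrategy G q} (hg : IsWinningFamily g)
    (hβ : Fintype.card β ≤ pronic (Fintype.card ι))
    (hκ : (Fintype.card ι * q) ^ Fintype.card β ≤ Fintype.card κ) :
    ∃ g' : ι → HatStrategy (coneGraph ((⊥ : SimpleGraph κ) □ G)) q, IsWinningFamily g' := by
  classical
  have : Nonempty β := (hg 0).nonempty
  have : Nonempty ι :=
    Fintype.card_pos_iff.mp (Nat.pos_of_mul_pos_right (Fintype.card_pos.trans_le hβ))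
  obtain ⟨code⟩ : Nonempty ((β → ι × Fin q) ↪ κ) :=
    Function.Embedding.nonempty_of_card_le (by simpa using hκ)
  exact exists_isWinningFamily_cone hβ fun e =>
    hg.copiesStrategy_comp (Function.invFun_surjective code.injective e)

end Strategies

/-- Removing the root of `G_{d+1}(N)` leaves `N` disjoint copies of `G_d(N)`. -/
def ancTreeSuccIso (d N : ℕ) :
    ancTree (d + 1) N ≃g coneGraph ((⊥ : SimpleGraph (Fin N)) □ ancTree d N) where
  toFun
    | ⟨[], _⟩ => none
    | ⟨k :: l, hl⟩ => some (k, ⟨l, Nat.le_of_succ_le_succ hl⟩)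
  invFun
    | none => ⟨[], Nat.zero_le _⟩
    | some (k, l) => ⟨k :: l.1, Nat.succ_le_succ l.2⟩
  left_inv := by rintro ⟨_ | ⟨k, l⟩, hl⟩ <;> rfl
  right_inv := by rintro (_ | ⟨k, l⟩) <;> rfl
  map_rel_iff' := by
    rintro ⟨_ | ⟨k, l⟩, hl⟩ ⟨_ | ⟨k', l'⟩, hl'⟩
    case cons.cons =>
      simp only [coneGraph, SimpleGraph.boxProd_adj, SimpleGraph.bot_adj, ancTree, ne_eq,
        Equiv.coe_fn_mk, Subtype.mk.injEq, List.cons.injEq, List.cons_prefix_cons]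
      grind
    all_goals simp [coneGraph, ancTree]

lemma sylvester_pos : ∀ n, 0 < sylvester n
  | 0 => two_pos
  | _ + 1 => Nat.succ_pos _

lemma sylvester_succ_sub_one (n : ℕ) : sylvester (n + 1) - 1 = pronic (sylvester n - 1) := by
  rw [sylvester, pronic, Nat.add_sub_cancel, Nat.sub_add_cancel (sylvester_pos n),
    Nat.sub_one_mul, sq]

lemma sylvester_sub_one (n : ℕ) : sylvester n - 1 = pronic^[n] 1 := by
  induction n with
  | zero => rfl
  | succ n ih => rw [sylvester_succ_sub_one, ih, Function.iterate_succ_apply']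

lemma exists_isWinningFamily_ancTree {N q : ℕ} (d t : ℕ) (ht : 0 < t) (hq : pronic^[d] t = q)
    (hN : (t * q ^ d) ^ q ≤ N) :
    ∃ g : Fin t → HatStrategy (ancTree d N) q, IsWinningFamily g := by
  induction d generalizing t with
  | zero =>
    obtain rfl : t = q := hq
    have : Nonempty {l : List (Fin N) // l.length ≤ 0} := ⟨⟨[], le_rfl⟩⟩
    exact ⟨_, isWinningFamily_const⟩
  | succ d ih =>
    rw [Function.iterate_succ_apply] at hq
    have hpos : 0 < pronic t := ht.trans_le (self_le_pronic t)
    have hle : pronic t ≤ q := hq ▸ self_le_iterate_pronic d (pronic t)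
    have : NeZero q := ⟨(hpos.trans_le hle).ne'⟩
    have hbase : pronic t * q ^ d ≤ t * q ^ (d + 1) := by
      rw [pronic, mul_assoc, pow_succ']
      gcongr
      exact (Nat.le_mul_of_pos_left _ ht).trans hle
    obtain ⟨g, hg⟩ := ih (pronic t) hpos hq ((Nat.pow_le_pow_left hbase q).trans hN)
    have hcopies : (t * q) ^ pronic t ≤ N := calc
      (t * q) ^ pronic t ≤ (t * q) ^ q := Nat.pow_le_pow_right (Nat.mul_pos ht (NeZero.pos q)) hle
      _ ≤ (t * q ^ (d + 1)) ^ q := by gcongr; exact Nat.le_self_pow d.succ_ne_zero q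
      _ ≤ N := hN
    obtain ⟨g', hg'⟩ := hg.exists_cone_copies (ι := Fin t) (κ := Fin N)
      (by simp) (by simpa using hcopies)
    exact ⟨_, hg'.comap (ancTreeSuccIso d N)⟩

/-- Lower bound in Theorem 1: with `q = s_d - 1` colors and `N ≥ q^(dq)`, the
players have a winning strategy on `G_d(N)`. -/
theorem hatWinning_ancTree_lower (d : ℕ) (hd : 1 ≤ d) (q : ℕ) (hq : q = sylvester d - 1)
    (N : ℕ) (hN : q ^ (d * q) ≤ N) :
    HatWinning (ancTree d N) q := by
  rw [sylvester_sub_one] at hq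
  obtain ⟨g, hg⟩ := exists_isWinningFamily_ancTree d 1 one_pos hq.symm
    (by rwa [one_mul, ← pow_mul] : (1 * q ^ d) ^ q ≤ N)
  exact hg.hatWinning
end

section
/- Let d ≥ 1 be an integer. For all sufficiently large n (in terms of d), HG(B_{d,n}) = h(ℕ^d) + 1, where B_{d,n} is the book graph and h(ℕ^d) is the largest t such that every t-element subset of ℕ^d is coverable. -/
/-! Once the colors `c` of the pages are fixed, the spine plays the game on a clique, and it can be
right on all of a prescribed set of spine colorings exactly when that set is coverable. So the
players win iff, for every `c`, the set of spine colorings on which all pages guess wrong is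
coverable. With `q` colors, `c` can be chosen such that this set contains any given set of fewer
than `q` spine colorings; and if there are enough pages to play every function from spine colorings
to colors, it never has `q` points itself. Relabeling each coordinate compares the spine colorings
with points of `ℕ^d`, so `q` colors can be won exactly when all sets of fewer than `q` points of
`ℕ^d` are coverable. -/

/-- The notion `Coverable` over arbitrary index and value types: `S` is covered by sets `P i`, one
for each coordinate direction, such that every line in direction `i` meets `P i` at most once, i.e.
such that a point of `P i` is determined by its coordinates other than the `i`-th. The sets `P i`
need not be disjoint, since shrinking them preserves the condition. -/
def LineCoverable {ι α : Type*} (S : Set (ι → α)) : Prop :=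
  ∃ P : ι → Set (ι → α), S ⊆ ⋃ i, P i ∧ ∀ i, Set.InjOn ({i}ᶜ : Set ι).domRestrict (P i)

section LineCoverable

variable {ι α β : Type*} {S T : Set (ι → α)}

theorem LineCoverable.mono (hST : S ⊆ T) (hT : LineCoverable T) : LineCoverable S := by
  obtain ⟨P, hTP, hP⟩ := hT
  exact ⟨P, hST.trans hTP, hP⟩

theorem LineCoverable.of_image_piMap {e : ι → α → β} (he : Set.InjOn (Pi.map e) S)
    (h : LineCoverable (Pi.map e '' S)) : LineCoverable S := by
  obtain ⟨P, hSP, hP⟩ := h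
  refine ⟨fun i => S ∩ Pi.map e ⁻¹' P i, fun x hx => ?_, ?_⟩
  · obtain ⟨i, hi⟩ := Set.mem_iUnion.1 (hSP ⟨x, hx, rfl⟩)
    exact Set.mem_iUnion.2 ⟨i, hx, hi⟩
  · rintro i x ⟨hxS, hxP⟩ y ⟨hyS, hyP⟩ hxy
    refine he hxS hyS (hP i hxP hyP (funext fun j => ?_))
    exact congrArg (e j) (congrFun hxy j)

theorem exists_injOn_piMap (hS : S.encard < ENat.card β) :
    ∃ e : ι → α → β, Set.InjOn (Pi.map e) S := by
  have hSfin : S.Finite := Set.encard_lt_top_iff.1 (hS.trans_le le_top)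
  have : Nonempty β := (ENat.card_pos_iff_nonempty β).1 (pos_of_gt hS)
  have hcoord (i : ι) : ∃ e : α → β, Set.InjOn e (Function.eval i '' S) := by
    obtain ⟨e, -, he⟩ := (hSfin.image (Function.eval i)).exists_injOn_of_encard_le
      (t := Set.univ) ((Set.encard_image_le _ _).trans (by simpa using hS.le))
    exact ⟨e, he⟩
  choose e he using hcoord
  refine ⟨e, fun x hx y hy hxy => funext fun i => ?_⟩
  exact he i ⟨x, hx, rfl⟩ ⟨y, hy, rfl⟩ (congrFun hxy i)

theorem LineCoverable.of_forall_encard_lt {m : ℕ∞} (hβ : m ≤ ENat.card β)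
    (h : ∀ T : Set (ι → β), T.encard < m → LineCoverable T) (hS : S.encard < m) :
    LineCoverable S := by
  obtain ⟨e, he⟩ := exists_injOn_piMap (hS.trans_le hβ)
  exact .of_image_piMap he (h _ ((Set.encard_image_le _ _).trans_lt hS))

/-- Coverability is the hat guessing game on a clique, restricted to the colorings in `S`. -/
theorem lineCoverable_iff_exists_guess [Nonempty α] :
    LineCoverable S ↔ ∃ g : (i : ι) → (({i}ᶜ : Set ι) → α) → α,
      ∀ x ∈ S, ∃ i, g i (({i}ᶜ : Set ι).domRestrict x) = x i := by
  constructor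
  · rintro ⟨P, hSP, hP⟩
    refine ⟨fun i y => Function.invFunOn ({i}ᶜ : Set ι).domRestrict (P i) y i, fun x hx => ?_⟩
    obtain ⟨i, hi⟩ := Set.mem_iUnion.1 (hSP hx)
    exact ⟨i, congrFun ((hP i).leftInvOn_invFunOn hi) i⟩
  · rintro ⟨g, hg⟩
    refine ⟨fun i => {x | g i (({i}ᶜ : Set ι).domRestrict x) = x i},
      fun x hx => Set.mem_iUnion.2 (hg x hx), fun i x hx y hy hxy => funext fun j => ?_⟩
    by_cases hj : j = i
    · subst hj
      exact hx.symm.trans ((congrArg (g j) hxy).trans hy)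
    · exact congrFun hxy ⟨j, hj⟩

/-- Each of the `card ι` covering sets has at most `card α ^ (card ι - 1)` points. -/
theorem LineCoverable.card_le_card [Fintype ι] [Fintype α]
    (h : LineCoverable (Set.univ : Set (ι → α))) : Fintype.card α ≤ Fintype.card ι := by
  obtain ⟨P, hcover, hP⟩ := h
  rcases isEmpty_or_nonempty α with hα | hα
  · simp
  have hpart (i : ι) : (P i).ncard ≤ Fintype.card α ^ (Fintype.card ι - 1) := by
    rw [← (hP i).ncard_image]
    refine (Set.ncard_le_card _).trans_eq ?_
    rw [Nat.card_fun, Nat.card_coe_set_eq, Set.ncard_compl, Set.ncard_singleton,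
      Nat.card_eq_fintype_card, Nat.card_eq_fintype_card]
  have hsum : Fintype.card α ^ Fintype.card ι ≤
      Fintype.card ι * Fintype.card α ^ (Fintype.card ι - 1) := calc
    _ = (Set.univ : Set (ι → α)).ncard := by simp [Set.ncard_univ, Nat.card_fun]
    _ ≤ (⋃ i, P i).ncard := Set.ncard_le_ncard hcover
    _ ≤ ∑ i, (P i).ncard := Set.ncard_iUnion_le_of_fintype _
    _ ≤ _ := Finset.sum_le_card_nsmul _ _ _ fun i _ => hpart i
  have hι : Fintype.card ι ≠ 0 := by
    intro h0
    simp [h0] at hsum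
  rw [← mul_pow_sub_one hι] at hsum
  exact Nat.le_of_mul_le_mul_right hsum (pow_pos Fintype.card_pos _)

end LineCoverable

section hcov

variable {d : ℕ} [NeZero d]

theorem coverable_iff_lineCoverable {S : Set (Fin d → ℕ)} : Coverable S ↔ LineCoverable S := by
  constructor
  · rintro ⟨f, hf⟩
    refine ⟨fun i => {x ∈ S | f x = i}, fun x hx => Set.mem_iUnion.2 ⟨f x, hx, rfl⟩, ?_⟩
    rintro i x ⟨hx, rfl⟩ y ⟨hy, hfy⟩ hxy
    by_contra hne
    obtain ⟨j, hj, hxyj⟩ := hf x hx y hy hne hfy.symm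
    exact hxyj (congrFun hxy ⟨j, hj⟩)
  · rintro ⟨P, hSP, hP⟩
    choose! f hf using fun x (hx : x ∈ S) => Set.mem_iUnion.1 (hSP hx)
    refine ⟨f, fun x hx y hy hne hfxy => ?_⟩
    by_contra! hagree
    exact hne (hP (f x) (hf x hx) (hfxy ▸ hf y hy) (funext fun j => hagree j j.2))

theorem forall_coverable_iff_forall_encard_le {t : ℕ} :
    (∀ S : Set (Fin d → ℕ), S.Finite → S.ncard = t → Coverable S) ↔
      ∀ S : Set (Fin d → ℕ), S.encard ≤ t → LineCoverable S := by
  simp only [coverable_iff_lineCoverable]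
  constructor
  · intro h S hS
    obtain ⟨T, hST, -, hT⟩ := Set.exists_superset_subset_encard_eq S.subset_univ hS
      (by simp [Set.infinite_univ.encard_eq])
    have hTfin : T.Finite := Set.finite_of_encard_eq_coe hT
    exact (h T hTfin (by simp [Set.ncard, hT])).mono hST
  · intro h S hS hSt
    exact h S (by rw [← hS.cast_ncard_eq, hSt])

theorem bddAbove_forall_coverable :
    BddAbove {t : ℕ | ∀ S : Set (Fin d → ℕ), S.Finite → S.ncard = t → Coverable S} := by
  let box : Set (Fin d → Fin (d + 1)) := Set.univ
  refine ⟨box.ncard, fun t ht => le_of_not_ge fun hle => ?_⟩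
  have hbox : LineCoverable box := by
    refine .of_image_piMap (Function.Injective.piMap fun _ => Fin.val_injective).injOn
      (forall_coverable_iff_forall_encard_le.1 ht _ ((Set.encard_image_le _ _).trans ?_))
    rw [← box.toFinite.cast_ncard_eq]
    exact_mod_cast hle
  simpa using hbox.card_le_card

theorem forall_lineCoverable_iff_le_hcov {t : ℕ} :
    (∀ S : Set (Fin d → ℕ), S.encard ≤ t → LineCoverable S) ↔ t ≤ hcov d := by
  constructor
  · exact fun h => le_csSup bddAbove_forall_coverable (forall_coverable_iff_forall_encard_le.2 h)
  · intro ht S hS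
    have hzero : ∀ T : Set (Fin d → ℕ), T.encard ≤ (0 : ℕ) → LineCoverable T := by
      intro T hT
      obtain rfl : T = ∅ := by simpa using hT
      exact ⟨fun _ => ∅, by simp⟩
    have hmax : ∀ T : Set (Fin d → ℕ), T.Finite → T.ncard = hcov d → Coverable T :=
      Nat.sSup_mem (s := {t | ∀ T : Set (Fin d → ℕ), T.Finite → T.ncard = t → Coverable T})
        ⟨0, forall_coverable_iff_forall_encard_le.2 hzero⟩ bddAbove_forall_coverable
    exact forall_coverable_iff_forall_encard_le.1 hmax S (hS.trans (by exact_mod_cast ht))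

end hcov

section Pages

variable {V X α : Type*}

theorem exists_forall_ne_of_encard_lt {S : Set X} (hS : S.encard < ENat.card α)
    (page : V → X → α) : ∃ c : V → α, ∀ x ∈ S, ∀ v, page v x ≠ c v := by
  have hmissed (v : V) : ∃ a, a ∉ page v '' S := by
    by_contra! hall
    refine hS.not_ge ?_
    rw [← Set.encard_univ, ← Set.eq_univ_of_forall hall]
    exact Set.encard_image_le _ _
  choose c hc using hmissed
  exact ⟨c, fun x hx v h => hc v ⟨x, hx, h⟩⟩

/-- If the missed set `M` had at least `card α` points, a page whose guess is a left inverse of an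
injection `φ : α → M` would be right at some point of `M`. -/
theorem encard_forall_ne_lt [Finite α] [Nonempty α] {page : V → X → α}
    (hpage : Function.Surjective page) (c : V → α) :
    {x | ∀ v, page v x ≠ c v}.encard < ENat.card α := by
  by_contra! hle
  have : Nonempty X := (Set.encard_pos.1 ((ENat.card_pos (α := α)).trans_le hle)).to_type
  rw [← Set.encard_univ] at hle
  obtain ⟨φ, hmaps, hφ⟩ := Set.finite_univ.exists_injOn_of_encard_le hle
  obtain ⟨v, hv⟩ := hpage (Function.invFun φ)
  refine hmaps (Set.mem_univ (c v)) v ?_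
  rw [hv, Function.leftInverse_invFun (Set.injOn_univ.1 hφ)]

end Pages

section bookGraph

variable {d n q : ℕ}

theorem bookGraph_adj_inl_inl {i j : Fin d} : (bookGraph d n).Adj (.inl i) (.inl j) ↔ i ≠ j := by
  simp [bookGraph]

theorem bookGraph_adj_inl_inr (i : Fin d) (v : Fin n) : (bookGraph d n).Adj (.inl i) (.inr v) := by
  simp [bookGraph]

theorem not_bookGraph_adj_inr_inr (v w : Fin n) : ¬ (bookGraph d n).Adj (.inr v) (.inr w) := by
  simp [bookGraph]

theorem hatWinning_bookGraph_iff_exists_guess :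
    HatWinning (bookGraph d n) q ↔
      ∃ (spine : (i : Fin d) → (({i}ᶜ : Set (Fin d)) → Fin q) → (Fin n → Fin q) → Fin q)
        (page : Fin n → (Fin d → Fin q) → Fin q),
        ∀ x c, (∃ i, spine i (({i}ᶜ : Set (Fin d)).domRestrict x) c = x i) ∨
          ∃ v, page v x = c v := by
  constructor
  · rintro ⟨g, hg⟩
    refine ⟨fun i y c => g (.inl i) fun
        | ⟨.inl j, hj⟩ => y ⟨j, (bookGraph_adj_inl_inl.1 hj).symm⟩
        | ⟨.inr v, _⟩ => c v,
      fun v x => g (.inr v) fun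
        | ⟨.inl i, _⟩ => x i
        | ⟨.inr w, hw⟩ => (not_bookGraph_adj_inr_inr v w hw).elim, fun x c => ?_⟩
    obtain ⟨i | v, hguess⟩ := hg (Sum.elim x c)
    · refine .inl ⟨i, Eq.trans (congrArg (g (.inl i)) (funext ?_)) hguess⟩
      rintro ⟨j | v, _⟩ <;> rfl
    · refine .inr ⟨v, Eq.trans (congrArg (g (.inr v)) (funext ?_)) hguess⟩
      rintro ⟨i | w, hw⟩
      · rfl
      · exact (not_bookGraph_adj_inr_inr v w hw).elim
  · rintro ⟨spine, page, hguess⟩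
    refine ⟨fun
      | .inl i => fun χ => spine i (fun j => χ ⟨.inl j, bookGraph_adj_inl_inl.2 (Ne.symm j.2)⟩)
          fun v => χ ⟨.inr v, bookGraph_adj_inl_inr i v⟩
      | .inr v => fun χ => page v fun i => χ ⟨.inl i, (bookGraph_adj_inl_inr i v).symm⟩,
      fun χ => ?_⟩
    rcases hguess (χ ∘ .inl) (χ ∘ .inr) with ⟨i, hi⟩ | ⟨v, hv⟩
    · exact ⟨.inl i, hi⟩
    · exact ⟨.inr v, hv⟩

theorem hatWinning_bookGraph_iff_exists_lineCoverable [NeZero q] :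
    HatWinning (bookGraph d n) q ↔ ∃ page : Fin n → (Fin d → Fin q) → Fin q,
      ∀ c : Fin n → Fin q, LineCoverable {x | ∀ v, page v x ≠ c v} := by
  simp only [hatWinning_bookGraph_iff_exists_guess, lineCoverable_iff_exists_guess]
  constructor
  · rintro ⟨spine, page, hguess⟩
    exact ⟨page, fun c => ⟨fun i y => spine i y c, fun x hx =>
      (hguess x c).resolve_right fun ⟨v, hv⟩ => hx v hv⟩⟩
  · rintro ⟨page, hpage⟩
    choose spine hspine using hpage
    refine ⟨fun i y c => spine c i y, page, fun x c => or_iff_not_imp_right.2 fun hx => ?_⟩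
    exact hspine c x fun v hv => hx ⟨v, hv⟩

theorem HatWinning.lineCoverable_of_encard_lt (h : HatWinning (bookGraph d n) q)
    {S : Set (Fin d → Fin q)} (hS : S.encard < q) : LineCoverable S := by
  have : NeZero q := ⟨by rintro rfl; simp at hS⟩
  obtain ⟨page, hpage⟩ := hatWinning_bookGraph_iff_exists_lineCoverable.1 h
  obtain ⟨c, hc⟩ := exists_forall_ne_of_encard_lt (by simpa using hS) page
  exact (hpage c).mono hc

theorem hatWinning_bookGraph_of_forall_lineCoverable [NeZero q] (hn : q ^ q ^ d ≤ n)
    (h : ∀ S : Set (Fin d → Fin q), S.encard < q → LineCoverable S) :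
    HatWinning (bookGraph d n) q := by
  obtain ⟨e⟩ : Nonempty (((Fin d → Fin q) → Fin q) ↪ Fin n) :=
    Function.Embedding.nonempty_of_card_le (by simpa using hn)
  refine hatWinning_bookGraph_iff_exists_lineCoverable.2 ⟨Function.invFun e, fun c => h _ ?_⟩
  simpa using encard_forall_ne_lt (Function.invFun_surjective e.injective) c

end bookGraph

/-- Lemma 5 (He–Li): for `d ≥ 1` and all sufficiently large `n`,
`HG(B_{d,n}) = h(ℕ^d) + 1`. -/
theorem hatGuessing_book_eq_hcov (d : ℕ) (hd : 1 ≤ d) :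
    ∃ n₀ : ℕ, ∀ n : ℕ, n₀ ≤ n →
      hatGuessingNumber (bookGraph d n) = hcov d + 1 := by
  have : NeZero d := ⟨Nat.one_le_iff_ne_zero.1 hd⟩
  refine ⟨(hcov d + 1) ^ (hcov d + 1) ^ d, fun n hn => IsGreatest.csSup_eq ⟨?_, fun q hq => ?_⟩⟩
  · refine hatWinning_bookGraph_of_forall_lineCoverable hn fun S hS => ?_
    refine LineCoverable.of_forall_encard_lt (β := ℕ) (by simp) (fun T hT => ?_) hS
    refine forall_lineCoverable_iff_le_hcov.2 le_rfl T (Order.le_of_lt_add_one ?_)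
    exact_mod_cast hT
  · cases q with
    | zero => exact Nat.zero_le _
    | succ t =>
      refine Nat.succ_le_succ (forall_lineCoverable_iff_le_hcov.1 fun S hS => ?_)
      refine LineCoverable.of_forall_encard_lt (m := (t + 1 : ℕ)) (by simp)
        (fun T => hq.lineCoverable_of_encard_lt) (hS.trans_lt ?_)
      exact_mod_cast t.lt_succ_self
end

section
/- Every subset of ℕ^2 of size 5 is coverable; that is, for every S ⊆ ℕ^2 with |S| = 5, there is a partition S = S_1 ⊔ S_2 such that no two distinct points of S_1 share the same second coordinate and no two distinct points of S_2 share the same first coordinate. -/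
/-!
A cover of `S` is an assignment of distinct axis-parallel lines to the points of `S`, each line
passing through its point. By Hall's theorem it exists iff every finite `A ⊆ S` satisfies
`#A ≤ ∑ i, aᵢ`, where `aᵢ` counts the lines in direction `i` that meet `A`. For `d ≥ 2` the lines
through a point determine it, so `#A ≤ ∏ i, aᵢ`; as `2 * aᵢ ≤ 2 ^ aᵢ`, this gives
`2 ^ d * #A ≤ 2 ^ ∑ i, aᵢ`, which forces `#A ≤ ∑ i, aᵢ` as long as `#A ≤ d + 3`.
-/

open Finset

section JointProjections

variable {ι α : Type*} {β : ι → Type*} [Fintype ι] [∀ i, DecidableEq (β i)]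

theorem exists_injOn_sigmaMk_iff_forall_card_le_sum_card_image [Nonempty ι]
    (π : ∀ i, α → β i) (S : Set α) :
    (∃ f : α → ι, S.InjOn fun x ↦ (⟨f x, π (f x) x⟩ : Sigma β)) ↔
      ∀ A : Finset α, ↑A ⊆ S → #A ≤ ∑ i, #(A.image (π i)) := by
  classical
  constructor
  · rintro ⟨f, hf⟩ A hAS
    rw [← card_sigma]
    exact card_le_card_of_injOn _
      (fun x hx ↦ mem_sigma.2 ⟨mem_univ _, mem_image_of_mem _ hx⟩) (hf.mono hAS)
  · intro hall
    let t (x : S) : Finset (Sigma β) := univ.image fun i ↦ ⟨i, π i x⟩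
    have card_le_biUnion (s : Finset S) : #s ≤ #(s.biUnion t) := by
      have hbiUnion : s.biUnion t =
          univ.sigma fun i ↦ (s.map (.subtype (· ∈ S))).image (π i) := by
        ext ⟨i, b⟩
        simp [t]
      rw [hbiUnion, card_sigma, ← card_map (.subtype (· ∈ S))]
      exact hall _ (by simp)
    obtain ⟨g, hg, hgt⟩ :=
      (all_card_le_biUnion_card_iff_exists_injective t).1 card_le_biUnion
    let f : α → ι := Function.extend Subtype.val (fun x ↦ (g x).1) fun _ ↦ Classical.arbitrary ι
    have hf (x : S) : (⟨f x, π (f x) x⟩ : Sigma β) = g x := by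
      obtain ⟨i, -, hi⟩ := mem_image.1 (hgt x)
      have hfx : f x = (g x).1 := Subtype.val_injective.extend_apply _ _ x
      rw [hfx, ← hi]
    refine ⟨f, Set.injOn_iff_injective.2 ?_⟩
    convert hg
    exact funext hf

theorem card_le_prod_card_image_of_injective {π : ∀ i, α → β i}
    (hπ : Function.Injective fun x i ↦ π i x) (A : Finset α) :
    #A ≤ ∏ i, #(A.image (π i)) := by
  classical
  rw [← Fintype.card_piFinset]
  exact card_le_card_of_injOn _
    (fun x hx ↦ Fintype.mem_piFinset.2 fun i ↦ mem_image_of_mem _ hx) hπ.injOn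

end JointProjections

theorem two_pow_card_mul_prod_le_two_pow_sum {ι : Type*} (s : Finset ι) (a : ι → ℕ) :
    2 ^ #s * ∏ i ∈ s, a i ≤ 2 ^ ∑ i ∈ s, a i := by
  have two_mul_le (n : ℕ) : 2 * n ≤ 2 ^ n := by
    cases n with
    | zero => simp
    | succ k => rw [pow_succ']; exact Nat.mul_le_mul_left 2 k.lt_two_pow_self
  rw [← prod_const, ← prod_mul_distrib, ← prod_pow_eq_pow_sum]
  exact prod_le_prod' fun i _ ↦ two_mul_le (a i)

theorem le_of_two_pow_mul_le_two_pow {d m s : ℕ} (hd : 2 ≤ d) (hm : m ≤ d + 3)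
    (h : 2 ^ d * m ≤ 2 ^ s) : m ≤ s := by
  by_contra! hsm
  have hs : 2 ^ d * (s + 1) ≤ 2 ^ s := (Nat.mul_le_mul_left _ hsm).trans h
  have hds : d ≤ s :=
    (Nat.pow_le_pow_iff_right one_lt_two).1 ((Nat.le_mul_of_pos_right _ s.succ_pos).trans hs)
  obtain ⟨k, rfl⟩ := Nat.exists_eq_add_of_le hds
  have hk : d + k + 1 ≤ 2 ^ k := by
    rw [pow_add] at hs
    exact Nat.le_of_mul_le_mul_left hs (by positivity)
  have hk2 : k ≤ 2 := by omega
  interval_cases k <;> omega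

section AxisLine

variable {ι α : Type*}

/-- The line through `x` parallel to the `i`-th axis, encoded by the coordinates that are
constant along it, so that two points lie on a common such line iff their codes agree. -/
def axisLine (i : ι) (x : ι → α) : {j // j ≠ i} → α := fun j ↦ x j

theorem axisLine_ne_axisLine_iff {i : ι} {x y : ι → α} :
    axisLine i x ≠ axisLine i y ↔ ∃ j, j ≠ i ∧ x j ≠ y j := by
  simp [axisLine, funext_iff]

theorem injective_axisLine [Nontrivial ι] :
    Function.Injective fun (x : ι → α) i ↦ axisLine i x := by
  intro x y hxy
  ext j
  obtain ⟨i, hij⟩ := exists_ne j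
  exact congr_fun (congr_fun hxy i) ⟨j, hij.symm⟩

end AxisLine

theorem coverable_iff_exists_injOn_axisLine {d : ℕ} {S : Set (Fin d → ℕ)} :
    Coverable S ↔ ∃ f : (Fin d → ℕ) → Fin d,
      S.InjOn fun x ↦ (⟨f x, axisLine (f x) x⟩ : Σ i : Fin d, {j // j ≠ i} → ℕ) := by
  simp only [Coverable, ← axisLine_ne_axisLine_iff, Set.InjOn]
  refine exists_congr fun f ↦ ⟨fun h x hx y hy hxy ↦ ?_, fun h x hx y hy hne hf hline ↦ ?_⟩
  · by_contra hne
    obtain ⟨hf, hline⟩ := Sigma.mk.inj hxy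
    refine h x hx y hy hne hf ?_
    rw [← hf] at hline
    exact eq_of_heq hline
  · refine hne (h hx hy ?_)
    rw [← hf, hline]

theorem coverable_iff_forall_card_le_sum_card_image_axisLine {d : ℕ} [NeZero d]
    {S : Set (Fin d → ℕ)} :
    Coverable S ↔
      ∀ A : Finset (Fin d → ℕ), ↑A ⊆ S → #A ≤ ∑ i, #(A.image (axisLine i)) :=
  coverable_iff_exists_injOn_axisLine.trans
    (exists_injOn_sigmaMk_iff_forall_card_le_sum_card_image axisLine S)

theorem coverable_of_card_five_general {d : ℕ} (hd : 2 ≤ d) {S : Set (Fin d → ℕ)}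
    (hS : S.encard ≤ d + 3) : Coverable S := by
  have : NeZero d := ⟨by omega⟩
  have : Nontrivial (Fin d) := Fin.nontrivial_iff_two_le.2 hd
  refine coverable_iff_forall_card_le_sum_card_image_axisLine.2 fun A hAS ↦ ?_
  have hA : #A ≤ d + 3 := by
    have := (Set.encard_le_encard hAS).trans hS
    rw [Set.encard_coe_eq_coe_finsetCard] at this
    exact_mod_cast this
  refine le_of_two_pow_mul_le_two_pow hd hA ?_
  calc 2 ^ d * #A
      ≤ 2 ^ d * ∏ i, #(A.image (axisLine i)) :=
        Nat.mul_le_mul_left _ (card_le_prod_card_image_of_injective injective_axisLine A)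
    _ ≤ 2 ^ ∑ i, #(A.image (axisLine i)) := by
        simpa using two_pow_card_mul_prod_le_two_pow_sum univ fun i ↦ #(A.image (axisLine i))

/-- Every subset of `ℕ^2` of size `5` is coverable. -/
theorem coverable_of_card_five (S : Set (Fin 2 → ℕ)) (hfin : S.Finite)
    (hcard : S.ncard = 5) :
    Coverable S := by
  refine coverable_of_card_five_general le_rfl ?_
  rw [← hfin.cast_ncard_eq, hcard]
  norm_num
end
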